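/- Let f : S^{n−1} → (0,∞) and φ : (0,∞) → (0,∞) be smooth, and suppose ℜ : (0,∞) → (0,∞) is given by ℜ(s) = ∫₀ˢ dt/(t φ(t)) (finite for all s > 0). Then along any smooth, origin-symmetric, strictly convex solution of the flow, the functional P(t) = ∫_{S^{n−1}} ℜ(1/h(x,t)) f(x) dx satisfies, for every t, the identity P′(t) · ∫_{S^{n−1}} f(x)/φ(1/h(x,t)) dx = −(∫_{S^{n−1}} f(x)/φ(1/h(x,t)) dx)² + (∫_{S^{n−1}} f(x)² (|∇h|² + h²)^{n/2} / (h φ(1/h)² det(∇²h + hI)) dx) · (∫_{S^{n−1}} h det(∇²h + hI) (|∇h|² + h²)^{−n/2} dx), and by the Hölder (Cauchy–Schwarz) inequality this quantity is nonnegative. -/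

import Mathlib

/-!
The derivative of `P` is `∫ -(f / φ(1/h)) (∂ₜh / h)`, since `R' (s) = 1 / (s φ s)`. Write
`ρ = (|∇h|² + h²)^{1/2}`, `A = ∫ f / φ(1/h)` and `B = ∫ f² ρⁿ / (h φ(1/h)² det(∇²h + hI))`.
Substituting the flow equation gives `P' = -A + η B` with `η = |S^{n-1}| / A`, so the identity
amounts to `∫ h det(∇²h + hI) / ρⁿ = |S^{n-1}|` (`IsSupportFn.sphInt_eq_sphArea`).

This last fact is the change of variables under the radial Gauss map. Here it comes from the map
`ψ = ∇(F² / 2) = F ∇F`, where `F` is the 1-homogeneous extension of `h`. It is a bijection of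
`ℝⁿ ∖ {0}`: injective because the Hessian of `F² / 2` is positive definite
(`IsSupportFn.injOn_halfSq`), surjective because `z` is attained at a suitable multiple of a maximum
point of `⟪z, x⟫ / F x` on the sphere (`IsSupportFn.exists_halfSq_eq`). Its Jacobian determinant is
constant along rays, and equals `h^{n+1} det(∇²h + hI)` on the sphere
(`IsSupportFn.det_halfSqHess`); moreover `|ψ(r x)| = r h(x) ρ(x)`. Computing the volume of the unit
ball as the integral of this Jacobian over `ψ⁻¹(ball)` in polar coordinates gives
`|S^{n-1}| / n = (1 / n) ∫ h^{n+1} det(∇²h + hI) / (h ρ)ⁿ`.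

Differentiation under the integral sign is dominated convergence for the difference quotients, with
the mean value inequality and compactness of the sphere giving the bound. Nonnegativity is the
Cauchy–Schwarz inequality `A² ≤ B ∫ h det(∇²h + hI) / ρⁿ`.
-/

noncomputable section

open Metric MeasureTheory Set Filter Topology
open scoped RealInnerProductSpace NNReal

/-- Abbreviation for `n`-dimensional Euclidean space. -/
abbrev Euc (n : ℕ) : Type := EuclideanSpace ℝ (Fin n)

/-- The unit sphere `S^{n-1}` in `ℝⁿ`, as a set. -/
abbrev USphere (n : ℕ) : Set (Euc n) := Metric.sphere (0 : Euc n) 1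

/-- The surface (spherical Lebesgue) measure on the unit sphere. -/
def sphMeasure (n : ℕ) : Measure (USphere n) :=
  (volume : Measure (Euc n)).toSphere

/-- Total surface measure `|S^{n-1}|` of the unit sphere. -/
def sphArea (n : ℕ) : ℝ := (sphMeasure n Set.univ).toReal

/-- Integral over the unit sphere with respect to the spherical Lebesgue measure. -/
def sphInt (n : ℕ) (g : Euc n → ℝ) : ℝ :=
  ∫ x : USphere n, g x ∂(sphMeasure n)

/-- The covariant (spherical) gradient on `S^{n-1}` of the restriction of `F`,
i.e. the tangential component of the Euclidean gradient of `F`. -/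
def sphGrad (n : ℕ) (F : Euc n → ℝ) (x : Euc n) : Euc n :=
  gradient F x - ⟪gradient F x, x⟫ • x

/-- `√(|∇h|² + h²)` for the (1-homogeneous extension of the) function `F` at `x`. -/
def radTerm (n : ℕ) (F : Euc n → ℝ) (x : Euc n) : ℝ :=
  Real.sqrt (‖sphGrad n F x‖ ^ 2 + F x ^ 2)

/-- The Euclidean Hessian operator of `F` at `x`. For a positively 1-homogeneous `F`
this operator kills `x` and restricts on `x^⊥` to the matrix `∇²h + hI` of the
spherical Hessian. -/
def hessOp (n : ℕ) (F : Euc n → ℝ) (x : Euc n) : Euc n →L[ℝ] Euc n :=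
  fderiv ℝ (gradient F) x

/-- `det(∇²h + hI)` at `x ∈ S^{n-1}`: the determinant of the restriction of the Euclidean
Hessian of the 1-homogeneous extension to `x^⊥`, computed as the determinant of
`Hess F + x ⊗ x` on all of `ℝⁿ` (the Hessian of a 1-homogeneous function kills `x`). -/
def sphDet (n : ℕ) (F : Euc n → ℝ) (x : Euc n) : ℝ :=
  LinearMap.det
    ((hessOp n F x + (innerSL ℝ x).smulRight x : Euc n →L[ℝ] Euc n) : Euc n →ₗ[ℝ] Euc n)

/-- `F` is the (1-homogeneously extended) support function of a smooth strictly convex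
body with the origin in its interior: it is smooth away from the origin, positively
1-homogeneous, positive, and `∇²h + hI` is positive definite on each tangent space. -/
structure IsSupportFn (n : ℕ) (F : Euc n → ℝ) : Prop where
  smooth : ContDiffOn ℝ (⊤ : ℕ∞) F {(0 : Euc n)}ᶜ
  homog : ∀ c : ℝ, 0 < c → ∀ x : Euc n, F (c • x) = c * F x
  pos : ∀ x ∈ USphere n, 0 < F x
  posdef : ∀ x ∈ USphere n, ∀ v : Euc n, v ≠ 0 → ⟪x, v⟫ = 0 →
    0 < ⟪v, hessOp n F x v⟫

/-- The convex body determined by the support function `F`. -/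
def bodyOf (n : ℕ) (F : Euc n → ℝ) : Set (Euc n) :=
  {y | ∀ x ∈ USphere n, ⟪x, y⟫ ≤ F x}

/-- The radial function of the convex body with support function `F`. -/
def radialFn (n : ℕ) (F : Euc n → ℝ) (u : Euc n) : ℝ :=
  sSup {r : ℝ | 0 < r ∧ r • u ∈ bodyOf n F}

/-- The normalization factor `η` of the flow. -/
def flowEta (n : ℕ) (f : Euc n → ℝ) (φ : ℝ → ℝ) (h : Euc n → ℝ) : ℝ :=
  sphArea n / sphInt n (fun x => f x / φ (1 / h x))

/-- `H : ℝ → Euc n → ℝ` is (the family of support functions of) a smooth, origin-symmetric,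
strictly convex solution of the flow on the time interval `J`. -/
structure IsFlowSol (n : ℕ) (f : Euc n → ℝ) (φ : ℝ → ℝ) (J : Set ℝ)
    (H : ℝ → Euc n → ℝ) : Prop where
  smooth : ContDiffOn ℝ (⊤ : ℕ∞) (fun p : ℝ × Euc n => H p.1 p.2) (J ×ˢ {(0 : Euc n)}ᶜ)
  body : ∀ t ∈ J, IsSupportFn n (H t)
  symm : ∀ t ∈ J, ∀ x : Euc n, H t (-x) = H t x
  eqn : ∀ t ∈ J, ∀ x ∈ USphere n,
    HasDerivWithinAt (fun s => H s x)
      (H t x - flowEta n f φ (H t) * f x * radTerm n (H t) x ^ n /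
        (φ (1 / H t x) * sphDet n (H t) x)) J t

/-- Condition (i) of the Orlicz-Aleksandrov flow theorem. -/
def CondI (n : ℕ) (f : Euc n → ℝ) (φ : ℝ → ℝ) (h₀ : Euc n → ℝ) : Prop :=
  ∃ R : ℝ → ℝ, (∀ s ∈ Ioi (0 : ℝ), 0 < R s) ∧ StrictMonoOn R (Ioi 0) ∧
    Tendsto R (𝓝[>] (0 : ℝ)) (𝓝 0) ∧ Tendsto R atTop atTop ∧
    (∀ s ∈ Ioi (0 : ℝ), IntegrableOn (fun t => 1 / (t * φ t)) (Ioo 0 s) ∧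
      R s = ∫ t in Ioo (0 : ℝ) s, 1 / (t * φ t)) ∧
    (∀ s ∈ Ioi (0 : ℝ), HasDerivAt R (1 / (s * φ s)) s ∧ 1 / (s * φ s) ≠ 0) ∧
    ∃ Chat : ℝ, 0 < Chat ∧
      (∀ θ ∈ USphere n,
        sphInt n (fun x => f x * R (1 / |⟪x, θ⟫|)) ≤ Chat) ∧
      Chat < sphInt n (fun x => f x * R (1 / h₀ x))

/-- Condition (ii) of the Orlicz-Aleksandrov flow theorem. -/
def CondII (φ : ℝ → ℝ) : Prop :=
  ∃ R : ℝ → ℝ, (∀ s ∈ Ioi (0 : ℝ), 0 < R s) ∧ StrictAntiOn R (Ioi 0) ∧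
    Tendsto R (𝓝[>] (0 : ℝ)) atTop ∧ Tendsto R atTop (𝓝 0) ∧
    (∀ s ∈ Ioi (0 : ℝ), IntegrableOn (fun t => 1 / (t * φ t)) (Ioi s) ∧
      R s = ∫ t in Ioi s, 1 / (t * φ t)) ∧
    (∀ s ∈ Ioi (0 : ℝ), HasDerivAt R (-(1 / (s * φ s))) s ∧ 1 / (s * φ s) ≠ 0)

/-! ### Homogeneity and symmetry of the support function -/

namespace IsSupportFn

variable {n : ℕ} {F : Euc n → ℝ}

lemma contDiffAt (hF : IsSupportFn n F) {x : Euc n} (hx : x ≠ 0) :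
    ContDiffAt ℝ (⊤ : ℕ∞) F x :=
  hF.smooth.contDiffAt (isOpen_compl_singleton.mem_nhds hx)

lemma contDiffAt_gradient (hF : IsSupportFn n F) {x : Euc n} (hx : x ≠ 0) :
    ContDiffAt ℝ (⊤ : ℕ∞) (gradient F) x := by
  have h1 : ContDiffAt ℝ (⊤ : ℕ∞) (fderiv ℝ F) x :=
    (hF.contDiffAt hx).fderiv_right (by norm_cast)
  exact (InnerProductSpace.toDual ℝ (Euc n)).symm.toContinuousLinearEquiv.contDiff.contDiffAt.comp
    x h1

lemma differentiableAt (hF : IsSupportFn n F) {x : Euc n} (hx : x ≠ 0) :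
    DifferentiableAt ℝ F x :=
  (hF.contDiffAt hx).differentiableAt (by simp)

lemma differentiableAt_gradient (hF : IsSupportFn n F) {x : Euc n} (hx : x ≠ 0) :
    DifferentiableAt ℝ (gradient F) x :=
  (hF.contDiffAt_gradient hx).differentiableAt (by simp)

lemma continuousAt_hess (hF : IsSupportFn n F) {x : Euc n} (hx : x ≠ 0) :
    ContinuousAt (hessOp n F) x :=
  ((hF.contDiffAt_gradient hx).fderiv_right (m := 0) (by norm_cast)).continuousAt

lemma gradient_smul (hF : IsSupportFn n F) {c : ℝ} (hc : 0 < c) (x : Euc n) :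
    gradient F (c • x) = gradient F x := by
  have h : (fun y => F (c • y)) = c • F := by
    funext y; simp [hF.homog c hc y]
  have h2 := fderiv_comp_smul (𝕜 := ℝ) (f := F) (x := x) c
  rw [h, fderiv_const_smul_field] at h2
  have h3 := smul_right_injective _ hc.ne' h2
  simp only [gradient, h3]

lemma hess_smul (hF : IsSupportFn n F) {c : ℝ} (hc : 0 < c) (x : Euc n) :
    c • hessOp n F (c • x) = hessOp n F x := by
  have h : (fun y => gradient F (c • y)) = gradient F := by
    funext y; exact hF.gradient_smul hc y
  have h2 := fderiv_comp_smul (𝕜 := ℝ) (f := gradient F) (x := x) c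
  rw [h] at h2
  exact h2.symm

/-- Euler's relation for the 1-homogeneous function `F`. -/
lemma inner_gradient_self (hF : IsSupportFn n F) {x : Euc n} (hx : x ≠ 0) :
    ⟪gradient F x, x⟫ = F x := by
  have h1 : HasDerivAt (fun s : ℝ => F (s • x)) (⟪gradient F x, x⟫) 1 := by
    have h2 : HasDerivAt (fun s : ℝ => s • x) x 1 := by
      simpa using (hasDerivAt_id (1 : ℝ)).smul_const x
    have h3 : HasFDerivAt F (fderiv ℝ F x) ((1 : ℝ) • x) := by
      simpa using (hF.differentiableAt hx).hasFDerivAt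
    have h4 := h3.comp_hasDerivAt (1 : ℝ) h2
    rw [inner_gradient_left]
    exact h4
  have h5 : HasDerivAt (fun s : ℝ => F (s • x)) (F x) 1 := by
    have h6 : HasDerivAt (fun s : ℝ => s * F x) (F x) 1 := by
      simpa using (hasDerivAt_id (1 : ℝ)).mul_const (F x)
    refine h6.congr_of_eventuallyEq ?_
    filter_upwards [lt_mem_nhds (zero_lt_one' ℝ)] with s hs using hF.homog s hs x
  exact h1.unique h5

/-- The gradient is 0-homogeneous, so the Hessian kills the radial direction. -/
lemma hess_self (hF : IsSupportFn n F) {x : Euc n} (hx : x ≠ 0) : hessOp n F x x = 0 := by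
  have h2 : HasDerivAt (fun s : ℝ => s • x) x 1 := by
    simpa using (hasDerivAt_id (1 : ℝ)).smul_const x
  have h3 : HasFDerivAt (gradient F) (hessOp n F x) ((1 : ℝ) • x) := by
    rw [one_smul]; exact (hF.differentiableAt_gradient hx).hasFDerivAt
  have h4 := h3.comp_hasDerivAt (1 : ℝ) h2
  have h5 : HasDerivAt (gradient F ∘ fun s : ℝ => s • x) 0 1 := by
    refine (hasDerivAt_const (1 : ℝ) (gradient F x)).congr_of_eventuallyEq ?_
    filter_upwards [lt_mem_nhds (zero_lt_one' ℝ)] with s hs using hF.gradient_smul hs x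
  exact h4.unique h5

lemma hess_symm (hF : IsSupportFn n F) {x : Euc n} (hx : x ≠ 0) (v w : Euc n) :
    ⟪hessOp n F x v, w⟫ = ⟪v, hessOp n F x w⟫ := by
  have hs : IsSymmSndFDerivAt ℝ F x := by
    refine (hF.contDiffAt hx).isSymmSndFDerivAt ?_
    simp only [minSmoothness_of_isRCLikeNormedField]
    exact WithTop.coe_le_coe.2 le_top
  have key : ∀ a b : Euc n, ⟪hessOp n F x a, b⟫ = fderiv ℝ (fderiv ℝ F) x a b := by
    intro a b
    have h1 : DifferentiableAt ℝ (fderiv ℝ F) x :=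
      ((hF.contDiffAt hx).fderiv_right (m := 1) (by norm_cast)).differentiableAt (by simp)
    have h2 : HasFDerivAt (fun y => fderiv ℝ F y b) ((fderiv ℝ (fderiv ℝ F) x).flip b) x := by
      simpa using h1.hasFDerivAt.clm_apply (hasFDerivAt_const b x)
    have h3 : HasFDerivAt (fun y => fderiv ℝ F y b) ((innerSL ℝ b).comp (hessOp n F x)) x := by
      have h4 : (fun y => fderiv ℝ F y b) = fun y => innerSL ℝ b (gradient F y) := by
        funext y
        rw [innerSL_apply_apply, real_inner_comm, inner_gradient_left]
      rw [h4]
      exact (innerSL ℝ b).hasFDerivAt.comp x (hF.differentiableAt_gradient hx).hasFDerivAt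
    have h5 := congrArg (fun L => L a) (h2.unique h3)
    simp only [ContinuousLinearMap.flip_apply, ContinuousLinearMap.comp_apply,
      innerSL_apply_apply] at h5
    rw [h5, real_inner_comm]
  rw [key, hs v w, ← key, real_inner_comm]

end IsSupportFn

/-! ### The Hessian of `F² / 2` and its determinant -/

/-- An operator (not necessarily symmetric) with positive quadratic form has positive determinant:
along the segment joining it to the identity the determinant never vanishes. -/
lemma det_pos_of_inner_pos {n : ℕ} (A : Euc n →L[ℝ] Euc n)
    (hA : ∀ v, v ≠ 0 → 0 < ⟪v, A v⟫) : 0 < A.det := by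
  by_contra! hneg
  have hc : Continuous fun s : ℝ =>
      ((1 - s) • ContinuousLinearMap.id ℝ (Euc n) + s • A).det :=
    ContinuousLinearMap.continuous_det.comp (by fun_prop)
  obtain ⟨s, hs, h0⟩ := intermediate_value_Icc' (zero_le_one' ℝ) hc.continuousOn
    (show (0 : ℝ) ∈ Icc _ _ from ⟨by
      have h : (1 - 1 : ℝ) • ContinuousLinearMap.id ℝ (Euc n) + (1 : ℝ) • A = A := by ext1 v; simp
      rwa [h], by
      simp [ContinuousLinearMap.det, ← Module.End.one_eq_id]⟩)
  have hker : LinearMap.ker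
      (((1 - s) • ContinuousLinearMap.id ℝ (Euc n) + s • A : Euc n →L[ℝ] Euc n) :
        Euc n →ₗ[ℝ] Euc n) ≠ ⊥ := fun h => by
    have := (LinearMap.isUnit_iff_ker_eq_bot _).2 h
    exact (LinearMap.isUnit_iff_isUnit_det _ |>.1 this).ne_zero h0
  obtain ⟨v, hv, hv0⟩ := (Submodule.ne_bot_iff _).1 hker
  have h1 : (1 - s) * ‖v‖ ^ 2 + s * ⟪v, A v⟫ = 0 := by
    have h2 : (1 - s) • v + s • A v = 0 := hv
    have h3 := congrArg (fun w => ⟪v, w⟫) h2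
    simpa [inner_add_right, inner_smul_right] using h3
  have h4 := hA v hv0
  have h5 : 0 < ‖v‖ ^ 2 := by positivity
  rcases hs.1.eq_or_lt with h | h
  · subst h; simp at h1; exact hv0 h1
  · nlinarith [mul_pos h h4, mul_nonneg (sub_nonneg.2 hs.2) h5.le]

/-- The Hessian of `F² / 2` at `y`, i.e. the Jacobian of `y ↦ F y • ∇F y`. -/
def halfSqHess (n : ℕ) (F : Euc n → ℝ) (y : Euc n) : Euc n →L[ℝ] Euc n :=
  F y • hessOp n F y + (innerSL ℝ (gradient F y)).smulRight (gradient F y)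

namespace IsSupportFn

variable {n : ℕ} {F : Euc n → ℝ}

lemma halfSqHess_apply (y v : Euc n) :
    halfSqHess n F y v = F y • hessOp n F y v + ⟪gradient F y, v⟫ • gradient F y := rfl

lemma pos' (hF : IsSupportFn n F) {y : Euc n} (hy : y ≠ 0) : 0 < F y := by
  have h1 : 0 < ‖y‖ := norm_pos_iff.2 hy
  have h2 : F y = ‖y‖ * F (‖y‖⁻¹ • y) := by
    rw [← hF.homog _ h1, smul_inv_smul₀ h1.ne']
  rw [h2]
  exact mul_pos h1 (hF.pos _ (by simp [norm_smul, h1.ne']))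

lemma halfSqHess_smul (hF : IsSupportFn n F) {c : ℝ} (hc : 0 < c) (x : Euc n) :
    halfSqHess n F (c • x) = halfSqHess n F x := by
  rw [halfSqHess, hF.homog c hc, hF.gradient_smul hc, halfSqHess, ← hF.hess_smul hc x, smul_smul,
    mul_comm]

lemma hasFDerivAt_halfSq (hF : IsSupportFn n F) {y : Euc n} (hy : y ≠ 0) :
    HasFDerivAt (fun z => F z • gradient F z) (halfSqHess n F y) y := by
  have h := (hF.differentiableAt hy).hasFDerivAt.smul (hF.differentiableAt_gradient hy).hasFDerivAt
  have h2 : innerSL ℝ (gradient F y) = fderiv ℝ F y := by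
    ext v; rw [innerSL_apply_apply, inner_gradient_left]
  rw [halfSqHess, h2]
  exact h

lemma ne_zero_of_mem {x : Euc n} (hx : x ∈ USphere n) : x ≠ 0 := by
  rintro rfl; simp at hx

lemma inner_self_of_mem {x : Euc n} (hx : x ∈ USphere n) : ⟪x, x⟫ = 1 := by
  rw [real_inner_self_eq_norm_sq, mem_sphere_zero_iff_norm.1 hx]; norm_num

/-- The quadratic form of the Hessian of `F` only sees the component orthogonal to `x`. -/
lemma inner_hess_proj (hF : IsSupportFn n F) {x : Euc n} (hx : x ≠ 0) (v : Euc n) (a : ℝ) :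
    ⟪v, hessOp n F x v⟫ = ⟪v - a • x, hessOp n F x (v - a • x)⟫ := by
  have h1 : ⟪x, hessOp n F x v⟫ = 0 := by
    rw [← hF.hess_symm hx, hF.hess_self hx, inner_zero_left]
  simp [map_sub, hF.hess_self hx, inner_sub_left, inner_smul_left, h1]

lemma halfSqHess_pos_sphere (hF : IsSupportFn n F) {x : Euc n} (hx : x ∈ USphere n)
    {v : Euc n} (hv : v ≠ 0) : 0 < ⟪v, halfSqHess n F x v⟫ := by
  have hx0 := ne_zero_of_mem hx
  rw [halfSqHess_apply, inner_add_right, inner_smul_right, inner_smul_right,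
    hF.inner_hess_proj hx0 v ⟪x, v⟫, real_inner_comm (gradient F x) v]
  by_cases hw : v - ⟪x, v⟫ • x = 0
  · have h1 : v = ⟪x, v⟫ • x := sub_eq_zero.1 hw
    have h2 : ⟪x, v⟫ ≠ 0 := fun h => hv (by rw [h1, h, zero_smul])
    have h3 : ⟪v, gradient F x⟫ = ⟪x, v⟫ * F x := by
      conv_lhs => rw [h1]
      rw [inner_smul_left, real_inner_comm (gradient F x) x, hF.inner_gradient_self hx0]; rfl
    rw [hw, real_inner_comm v, h3]
    have := (hF.pos x hx).ne'
    simp only [inner_zero_left, mul_zero, zero_add]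
    exact mul_self_pos.2 (mul_ne_zero h2 this)
  · have h1 := hF.posdef x hx _ hw (by
      rw [inner_sub_right, inner_smul_right, inner_self_of_mem hx]; ring)
    have h2 := hF.pos x hx
    nlinarith [mul_pos h2 h1, mul_self_nonneg ⟪v, gradient F x⟫]

lemma halfSqHess_pos (hF : IsSupportFn n F) {y : Euc n} (hy : y ≠ 0)
    {v : Euc n} (hv : v ≠ 0) : 0 < ⟪v, halfSqHess n F y v⟫ := by
  have h1 : 0 < ‖y‖ := norm_pos_iff.2 hy
  have h2 : halfSqHess n F y = halfSqHess n F (‖y‖⁻¹ • y) :=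
    (hF.halfSqHess_smul (inv_pos.2 h1) y).symm
  rw [h2]
  exact hF.halfSqHess_pos_sphere (by simp [norm_smul, h1.ne']) hv

/-- With `A = D²F(x)`, `p = ∇F(x)` and `h = F(x)`, the operator `h A + p ⊗ p` factors as
`h (I + (p - x) ⊗ x) ∘ (A + x ⊗ x) ∘ (I + x ⊗ (p - h x) / h)`, and the determinants of the outer
factors are `h ^ (n + 1)` and `1`. -/
lemma det_halfSqHess (hF : IsSupportFn n F) {x : Euc n} (hx : x ∈ USphere n) :
    (halfSqHess n F x).det = F x ^ (n + 1) * sphDet n F x := by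
  have hx0 := ne_zero_of_mem hx
  have hxx := inner_self_of_mem hx
  have hh := (hF.pos x hx).ne'
  have hpx := hF.inner_gradient_self hx0
  have hxp : ⟪x, gradient F x⟫ = F x := by rw [real_inner_comm, hpx]
  set p := gradient F x with hp
  obtain ⟨q, hq⟩ : ∃ q, q = (F x)⁻¹ • (p - F x • x) := ⟨_, rfl⟩
  have hqv : ∀ v, ⟪q, v⟫ = (F x)⁻¹ * (⟪p, v⟫ - F x * ⟪x, v⟫) := fun v => by
    rw [hq, inner_smul_left, inner_sub_left, inner_smul_left]; rfl
  have hfac : ((halfSqHess n F x : Euc n →L[ℝ] Euc n) : Euc n →ₗ[ℝ] Euc n) =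
      (F x • LinearMap.transvection (innerSL ℝ x : Euc n →ₗ[ℝ] ℝ) (p - x)) ∘ₗ
      (((hessOp n F x + (innerSL ℝ x).smulRight x : Euc n →L[ℝ] Euc n) : Euc n →ₗ[ℝ] Euc n) ∘ₗ
      LinearMap.transvection (innerSL ℝ q : Euc n →ₗ[ℝ] ℝ) x) := by
    ext1 v
    have h1 : ⟪x, hessOp n F x v⟫ = 0 := by
      rw [← hF.hess_symm hx0, hF.hess_self hx0, inner_zero_left]
    simp only [LinearMap.comp_apply, LinearMap.smul_apply, LinearMap.transvection.apply,
      ContinuousLinearMap.coe_coe, innerSL_apply_apply, halfSqHess_apply, add_apply,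
      ContinuousLinearMap.smulRight_apply, map_add, map_smul, hF.hess_self hx0,
      hqv, h1, hxx, ← hp, zero_add]
    match_scalars <;> field_simp <;> ring
  have hd := congrArg LinearMap.det hfac
  rw [LinearMap.det_comp, LinearMap.det_comp, LinearMap.det_smul, LinearMap.transvection.det,
    LinearMap.transvection.det] at hd
  rw [ContinuousLinearMap.det, hd, sphDet]
  simp only [ContinuousLinearMap.coe_coe, innerSL_apply_apply, hqv, inner_sub_right, hxp, hpx, hxx, finrank_euclideanSpace, Fintype.card_fin]
  ring

lemma sphDet_pos (hF : IsSupportFn n F) {x : Euc n} (hx : x ∈ USphere n) :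
    0 < sphDet n F x := by
  have h1 := det_pos_of_inner_pos _ (fun v hv => hF.halfSqHess_pos_sphere hx (v := v) hv)
  rw [hF.det_halfSqHess hx] at h1
  exact (mul_pos_iff_of_pos_left (pow_pos (hF.pos x hx) _)).1 h1

lemma radTerm_eq (hF : IsSupportFn n F) {x : Euc n} (hx : x ∈ USphere n) :
    radTerm n F x = ‖gradient F x‖ := by
  have hpx := hF.inner_gradient_self (ne_zero_of_mem hx)
  have h1 : ‖sphGrad n F x‖ ^ 2 + F x ^ 2 = ‖gradient F x‖ ^ 2 := by
    rw [sphGrad, norm_sub_sq_real, inner_smul_right, hpx, norm_smul,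
      mem_sphere_zero_iff_norm.1 hx, Real.norm_eq_abs, mul_one, sq_abs]
    ring
  rw [radTerm, h1, Real.sqrt_sq (norm_nonneg _)]

lemma radTerm_pos (hF : IsSupportFn n F) {x : Euc n} (hx : x ∈ USphere n) :
    0 < radTerm n F x :=
  Real.sqrt_pos.2 (by have := hF.pos x hx; positivity)

lemma continuousOn_sphDet (hF : IsSupportFn n F) : ContinuousOn (sphDet n F) (USphere n) := by
  intro x hx
  refine ContinuousAt.continuousWithinAt ?_
  refine ContinuousLinearMap.continuous_det.continuousAt.comp ?_
  have := hF.continuousAt_hess (ne_zero_of_mem hx)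
  have h2 : Continuous fun x : Euc n => (innerSL ℝ x).smulRight x := by fun_prop
  exact this.add h2.continuousAt

lemma continuousOn_radTerm (hF : IsSupportFn n F) : ContinuousOn (radTerm n F) (USphere n) := by
  refine ContinuousOn.congr (fun x hx => ?_) (fun x hx => hF.radTerm_eq hx)
  exact (hF.contDiffAt_gradient (ne_zero_of_mem hx)).continuousAt.norm.continuousWithinAt

lemma continuousOn_sphere (hF : IsSupportFn n F) : ContinuousOn F (USphere n) := fun _ hx =>
  (hF.contDiffAt (ne_zero_of_mem hx)).continuousAt.continuousWithinAt

end IsSupportFn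

/-! ### The gradient of `F² / 2` as a change of variables -/

namespace IsSupportFn

variable {n : ℕ} {F : Euc n → ℝ}

lemma inner_halfSq_self (hF : IsSupportFn n F) {y : Euc n} (hy : y ≠ 0) :
    ⟪F y • gradient F y, y⟫ = F y ^ 2 := by
  rw [inner_smul_left, hF.inner_gradient_self hy, sq]; rfl

/-- The gradient of `F² / 2` is injective away from the origin: on a segment avoiding the origin it
is strictly monotone, and two points on opposite rays are separated by Euler's relation. -/
lemma injOn_halfSq (hF : IsSupportFn n F) :
    InjOn (fun y => F y • gradient F y) ({0}ᶜ : Set (Euc n)) := by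
  intro a ha b hb hab
  have ha' : a ≠ 0 := ha
  have hb' : b ≠ 0 := hb
  by_contra hne
  have h1 := hF.inner_halfSq_self ha'
  have h2 := hF.inner_halfSq_self hb'
  have hFa := hF.pos' ha'
  have hFb := hF.pos' hb'
  simp only at hab
  by_cases h0 : ∃ s ∈ Icc (0 : ℝ) 1, a + s • (b - a) = 0
  · obtain ⟨s, hs, h3⟩ := h0
    have h4 := congrArg (fun w => ⟪F a • gradient F a, w⟫) h3
    simp only [inner_add_right, inner_smul_right, inner_sub_right, inner_zero_right] at h4
    rw [h1, hab, h2] at h4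
    rcases hs.1.eq_or_lt with h | h
    · subst h; nlinarith
    · nlinarith [mul_pos h (pow_pos hFb 2), mul_nonneg (sub_nonneg.2 hs.2) (pow_pos hFa 2).le]
  · push Not at h0
    have hd : ∀ s ∈ Icc (0 : ℝ) 1, HasDerivAt
        (fun s : ℝ => ⟪b - a, F (a + s • (b - a)) • gradient F (a + s • (b - a))⟫)
        ⟪b - a, halfSqHess n F (a + s • (b - a)) (b - a)⟫ s := by
      intro s hs
      have h5 : HasDerivAt (fun s : ℝ => a + s • (b - a)) (b - a) s := by
        simpa using ((hasDerivAt_id s).smul_const (b - a)).const_add a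
      have h6 := (hF.hasFDerivAt_halfSq (h0 s hs)).comp_hasDerivAt s h5
      exact ((innerSL ℝ (b - a)).hasFDerivAt).comp_hasDerivAt s h6
    obtain ⟨c, hc, hc0⟩ := exists_hasDerivAt_eq_zero (zero_lt_one' ℝ)
      (fun s hs => (hd s hs).continuousAt.continuousWithinAt) (by simp [hab])
      (fun s hs => hd s (Ioo_subset_Icc_self hs))
    exact (hF.halfSqHess_pos (h0 c (Ioo_subset_Icc_self hc)) (sub_ne_zero.2 (Ne.symm hne))).ne' hc0

/-- The gradient of `F² / 2` reaches every nonzero `z`: at a maximum point of `⟪z, x⟫ / F x` the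
gradient of `F` is parallel to `z`. -/
lemma exists_halfSq_eq (hF : IsSupportFn n F) {z : Euc n} (hz : z ≠ 0) :
    ∃ y, y ≠ 0 ∧ F y • gradient F y = z := by
  have hz1 : 0 < ‖z‖ := norm_pos_iff.2 hz
  have hzm : ‖z‖⁻¹ • z ∈ USphere n := by simp [norm_smul, hz1.ne']
  have hcont : ContinuousOn (fun x => ⟪z, x⟫ / F x) (USphere n) := by
    intro x hx
    have h1 := (hF.contDiffAt (ne_zero_of_mem hx)).continuousAt
    have h2 : ContinuousAt (fun x : Euc n => ⟪z, x⟫) x := by fun_prop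
    exact (h2.div h1 (hF.pos x hx).ne').continuousWithinAt
  obtain ⟨x, hx, hmax⟩ := (isCompact_sphere (0 : Euc n) 1).exists_isMaxOn ⟨_, hzm⟩ hcont
  have hx0 := ne_zero_of_mem hx
  have hFx := hF.pos x hx
  have hle : ∀ y : Euc n, y ≠ 0 → ⟪z, y⟫ * F x - ⟪z, x⟫ * F y ≤ 0 := by
    intro y hy
    have hy1 : 0 < ‖y‖ := norm_pos_iff.2 hy
    have h1 := hmax (show ‖y‖⁻¹ • y ∈ USphere n by simp [norm_smul, hy1.ne'])
    simp only [mem_ofPred_eq] at h1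
    rw [hF.homog _ (inv_pos.2 hy1), inner_smul_right,
      mul_div_mul_left _ _ (inv_pos.2 hy1).ne', div_le_div_iff₀ (hF.pos' hy) hFx] at h1
    linarith
  have hq : 0 < ⟪z, x⟫ := by
    have h1 := hle z hz
    rw [real_inner_self_eq_norm_sq] at h1
    have h2 : 0 < ⟪z, x⟫ * F z := by nlinarith [mul_pos (pow_pos hz1 2) hFx]
    exact (mul_pos_iff_of_pos_right (hF.pos' hz)).1 h2
  have hloc : IsLocalMax (fun y : Euc n => ⟪z, y⟫ * F x - ⟪z, x⟫ * F y) x := by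
    filter_upwards [isOpen_compl_singleton.mem_nhds hx0] with y hy
    simpa using hle y hy
  have hder : HasFDerivAt (fun y : Euc n => ⟪z, y⟫ * F x - ⟪z, x⟫ * F y)
      (F x • innerSL ℝ z - ⟪z, x⟫ • fderiv ℝ F x) x :=
    ((innerSL ℝ z).hasFDerivAt.mul_const (F x)).sub
      ((hF.differentiableAt hx0).hasFDerivAt.const_mul _)
  have h0 := hloc.hasFDerivAt_eq_zero hder
  have hg : F x • z = ⟪z, x⟫ • gradient F x := by
    refine ext_inner_right ℝ fun v => ?_
    have h1 := congrArg (fun L => L v) h0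
    simp only [sub_apply, smul_apply, innerSL_apply_apply, ← inner_gradient_left, smul_eq_mul,
      zero_apply] at h1
    simp only [inner_smul_left, conj_trivial]
    linarith
  have hr : 0 < ⟪z, x⟫ / F x ^ 2 := by positivity
  refine ⟨(⟪z, x⟫ / F x ^ 2) • x, smul_ne_zero hr.ne' hx0, ?_⟩
  rw [hF.homog _ hr, hF.gradient_smul hr]
  have h2 : z = (F x)⁻¹ • (⟪z, x⟫ • gradient F x) := by rw [← hg, inv_smul_smul₀ hFx.ne']
  conv_rhs => rw [h2]
  rw [smul_smul]
  congr 1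
  field_simp

/-- The part of the punctured space that the gradient of `F² / 2` maps into the unit ball. -/
def halfSqDom (n : ℕ) (F : Euc n → ℝ) : Set (Euc n) :=
  {0}ᶜ ∩ (fun y => F y • gradient F y) ⁻¹' ball 0 1

lemma isOpen_halfSqDom (hF : IsSupportFn n F) : IsOpen (halfSqDom n F) :=
  ContinuousOn.isOpen_inter_preimage
    (fun _ hy => (hF.hasFDerivAt_halfSq hy).continuousAt.continuousWithinAt)
    isOpen_compl_singleton isOpen_ball

lemma image_halfSqDom (hF : IsSupportFn n F) :
    (fun y => F y • gradient F y) '' halfSqDom n F = ball 0 1 \ {0} := by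
  ext z
  constructor
  · rintro ⟨y, ⟨hy, hyb⟩, rfl⟩
    refine ⟨hyb, fun h => ?_⟩
    have h1 := hF.inner_halfSq_self hy
    simp only [mem_singleton_iff] at h
    rw [h, inner_zero_left] at h1
    exact (pow_pos (hF.pos' hy) 2).ne h1
  · rintro ⟨hz, hz0⟩
    obtain ⟨y, hy, rfl⟩ := hF.exists_halfSq_eq hz0
    exact ⟨y, ⟨hy, hz⟩, rfl⟩

lemma volume_ball_eq (hF : IsSupportFn n F) (hn : 2 ≤ n) :
    volume (ball (0 : Euc n) 1) =
      ∫⁻ y in halfSqDom n F, ENNReal.ofReal |(halfSqHess n F y).det| := by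
  have : Nontrivial (Euc n) := by
    have : Nonempty (Fin n) := ⟨⟨0, by omega⟩⟩
    infer_instance
  rw [lintegral_abs_det_fderiv_eq_addHaar_image _ hF.isOpen_halfSqDom.measurableSet
    (fun y hy => (hF.hasFDerivAt_halfSq hy.1).hasFDerivWithinAt)
    (hF.injOn_halfSq.mono inter_subset_left), hF.image_halfSqDom,
    measure_sdiff_null (measure_singleton _)]

/-- Polar coordinates in the volume of `halfSqDom`: the Jacobian is constant along rays, and the ray
through `x` meets the domain in the radii `r < (F x * ‖∇F x‖)⁻¹`. -/
lemma lintegral_halfSqDom (hF : IsSupportFn n F) (hn : 2 ≤ n) :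
    ∫⁻ y in halfSqDom n F, ENNReal.ofReal |(halfSqHess n F y).det| =
      ∫⁻ x : USphere n, ENNReal.ofReal
        ((n : ℝ)⁻¹ * (F x * sphDet n F x / radTerm n F x ^ n)) ∂(sphMeasure n) := by
  have hcF : Continuous fun x : USphere n => F x :=
    continuousOn_iff_continuous_domRestrict.1 hF.continuousOn_sphere
  have hcR : Continuous fun x : USphere n => radTerm n F x :=
    continuousOn_iff_continuous_domRestrict.1 hF.continuousOn_radTerm
  have hcD : Continuous fun x : USphere n => sphDet n F x :=
    continuousOn_iff_continuous_domRestrict.1 hF.continuousOn_sphDet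
  let K : USphere n → ENNReal := fun x => ENNReal.ofReal (F x ^ (n + 1) * sphDet n F x)
  let U : Set (USphere n × Ioi (0 : ℝ)) := {p | p.2.1 * (F p.1 * radTerm n F p.1) < 1}
  have hU : IsOpen U := isOpen_lt
    ((continuous_subtype_val.comp continuous_snd).mul
      ((hcF.mul hcR).comp continuous_fst)) continuous_const
  let G : USphere n × Ioi (0 : ℝ) → ENNReal := U.indicator fun p => K p.1
  have hG : Measurable G := by
    refine Measurable.indicator ?_ hU.measurableSet
    exact (((hcF.pow _).mul hcD).comp continuous_fst).measurable.ennreal_ofReal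
  have hcoe : ∀ y : ({0}ᶜ : Set (Euc n)),
      (halfSqDom n F).indicator (fun y => ENNReal.ofReal |(halfSqHess n F y).det|) y =
        G (homeomorphUnitSphereProd (Euc n) y) := by
    intro y
    obtain ⟨p, rfl⟩ := (homeomorphUnitSphereProd (Euc n)).symm.surjective y
    rw [Homeomorph.apply_symm_apply]
    obtain ⟨x, r⟩ := p
    have hr : (0 : ℝ) < r := r.2
    have hx0 := ne_zero_of_mem x.2
    have hFx := hF.pos x x.2
    rw [homeomorphUnitSphereProd_symm_apply_coe]
    simp only [G, indicator, K]
    have hiff : r.1 • x.1 ∈ halfSqDom n F ↔ (x, r) ∈ U := by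
      have h1 : ‖F (r.1 • x.1) • gradient F (r.1 • x.1)‖ = r.1 * (F x * radTerm n F x) := by
        rw [hF.homog _ hr, hF.gradient_smul hr, norm_smul, Real.norm_eq_abs,
          abs_of_pos (mul_pos hr hFx), hF.radTerm_eq x.2, mul_assoc]
      have h2 : r.1 • x.1 ≠ 0 := smul_ne_zero hr.ne' hx0
      simp only [halfSqDom, mem_inter_iff, mem_compl_iff, mem_singleton_iff, h2, not_false_eq_true,
        true_and, mem_preimage, mem_ball_zero_iff, h1, U, mem_ofPred_eq]
    have hdet : |(halfSqHess n F (r.1 • x.1)).det| = F x ^ (n + 1) * sphDet n F x := by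
      rw [hF.halfSqHess_smul hr, hF.det_halfSqHess x.2, abs_of_pos]
      exact mul_pos (pow_pos hFx _) (hF.sphDet_pos x.2)
    rw [hdet]
    by_cases h : (x, r) ∈ U
    · rw [if_pos h, if_pos (hiff.2 h)]
    · rw [if_neg h, if_neg (fun h' => h (hiff.1 h'))]
  have hdim : Module.finrank ℝ (Euc n) - 1 + 1 = n := by
    rw [finrank_euclideanSpace, Fintype.card_fin]; omega
  calc ∫⁻ y in halfSqDom n F, ENNReal.ofReal |(halfSqHess n F y).det|
      = ∫⁻ y in ({0}ᶜ : Set (Euc n)),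
          (halfSqDom n F).indicator (fun y => ENNReal.ofReal |(halfSqHess n F y).det|) y := by
        rw [lintegral_indicator hF.isOpen_halfSqDom.measurableSet,
          Measure.restrict_restrict hF.isOpen_halfSqDom.measurableSet,
          inter_eq_left.2 (show halfSqDom n F ⊆ {0}ᶜ from inter_subset_left)]
    _ = ∫⁻ y : ({0}ᶜ : Set (Euc n)), G (homeomorphUnitSphereProd (Euc n) y)
          ∂(volume.comap Subtype.val) := by
        rw [← lintegral_subtype_comap (measurableSet_singleton _).compl]
        exact lintegral_congr hcoe
    _ = ∫⁻ p, G p ∂((sphMeasure n).prod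
          (Measure.volumeIoiPow (Module.finrank ℝ (Euc n) - 1))) :=
        (volume : Measure (Euc n)).measurePreserving_homeomorphUnitSphereProd.lintegral_comp_emb
          (Homeomorph.measurableEmbedding _) _
    _ = ∫⁻ x, ∫⁻ r, G (x, r) ∂(Measure.volumeIoiPow (Module.finrank ℝ (Euc n) - 1))
          ∂(sphMeasure n) := lintegral_prod _ hG.aemeasurable
    _ = _ := by
        refine lintegral_congr fun x => ?_
        have hFx := hF.pos x x.2
        have hRx := hF.radTerm_pos x.2
        have hDx := hF.sphDet_pos x.2
        have hc : 0 < (F x * radTerm n F x)⁻¹ := by positivity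
        have h1 : (fun r : Ioi (0 : ℝ) => G (x, r)) =
            (Iio (⟨_, hc⟩ : Ioi (0 : ℝ))).indicator fun _ => K x := by
          funext r
          have h2 : (x, r) ∈ U ↔ r ∈ Iio (⟨_, hc⟩ : Ioi (0 : ℝ)) := by
            simp only [U, mem_ofPred_eq, mem_Iio, ← Subtype.coe_lt_coe]
            rw [← one_div, lt_div_iff₀ (by positivity)]
          by_cases h : (x, r) ∈ U
          · rw [indicator_of_mem (h2.1 h)]; exact indicator_of_mem h _
          · rw [indicator_of_notMem (fun h' => h (h2.2 h'))]; exact indicator_of_notMem h _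
        rw [h1, lintegral_indicator_const measurableSet_Iio, Measure.volumeIoiPow_apply_Iio,
          ← ENNReal.ofReal_mul (by positivity), hdim]
        congr 1
        have h3 : ((Module.finrank ℝ (Euc n) - 1 : ℕ) : ℝ) + 1 = n := by exact_mod_cast hdim
        have hn0 : (n : ℝ) ≠ 0 := by positivity
        rw [h3, inv_pow, mul_pow]
        field_simp
        ring

/-- Change of variables under the radial Gauss map:
`∫ h det(∇²h + hI) (|∇h|² + h²)^{-n/2} = |S^{n-1}|`. -/
lemma sphInt_eq_sphArea (hF : IsSupportFn n F) (hn : 2 ≤ n) :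
    sphInt n (fun x => F x * sphDet n F x / radTerm n F x ^ n) = sphArea n := by
  have hcF : Continuous fun x : USphere n => F x :=
    continuousOn_iff_continuous_domRestrict.1 hF.continuousOn_sphere
  have hcR : Continuous fun x : USphere n => radTerm n F x :=
    continuousOn_iff_continuous_domRestrict.1 hF.continuousOn_radTerm
  have hcD : Continuous fun x : USphere n => sphDet n F x :=
    continuousOn_iff_continuous_domRestrict.1 hF.continuousOn_sphDet
  have hpos : ∀ x : USphere n,
      0 ≤ (n : ℝ)⁻¹ * (F x * sphDet n F x / radTerm n F x ^ n) := fun x => by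
    have hFx := hF.pos x x.2
    have hRx := hF.radTerm_pos x.2
    have hDx := hF.sphDet_pos x.2
    positivity
  have hcont : Continuous fun x : USphere n =>
      (n : ℝ)⁻¹ * (F x * sphDet n F x / radTerm n F x ^ n) :=
    continuous_const.mul ((hcF.mul hcD).div (hcR.pow n)
      fun x => (pow_pos (hF.radTerm_pos x.2) n).ne')
  have h1 := integral_eq_lintegral_of_nonneg_ae (μ := sphMeasure n)
    (Eventually.of_forall hpos) hcont.aestronglyMeasurable
  rw [← hF.lintegral_halfSqDom hn, ← hF.volume_ball_eq hn, integral_const_mul] at h1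
  have hn0 : (n : ℝ) ≠ 0 := by positivity
  rw [sphArea, sphMeasure, Measure.toSphere_apply_univ, ENNReal.toReal_mul, ← h1, sphInt,
    finrank_euclideanSpace, Fintype.card_fin, ENNReal.toReal_natCast, ← mul_assoc,
    mul_inv_cancel₀ hn0, one_mul]

end IsSupportFn

/-! ### Calculus of integrals -/

lemma hasDerivAt_of_eq_integral {φ R : ℝ → ℝ} (hφ_smooth : ContDiffOn ℝ (⊤ : ℕ∞) φ (Ioi 0))
    (hφ_pos : ∀ s ∈ Ioi (0 : ℝ), 0 < φ s)
    (hR : ∀ s ∈ Ioi (0 : ℝ), IntegrableOn (fun t => 1 / (t * φ t)) (Ioo 0 s) ∧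
      R s = ∫ t in Ioo (0 : ℝ) s, 1 / (t * φ t)) {s : ℝ} (hs : 0 < s) :
    HasDerivAt R (1 / (s * φ s)) s := by
  have hcont : ContinuousOn (fun t => 1 / (t * φ t)) (Ioi 0) :=
    continuousOn_const.div (continuousOn_id.mul hφ_smooth.continuousOn)
      fun t ht => (mul_pos ht (hφ_pos t ht)).ne'
  have hint : IntervalIntegrable (fun t => 1 / (t * φ t)) volume 0 s :=
    (intervalIntegrable_iff_integrableOn_Ioo_of_le hs.le).2 (hR s hs).1
  have h1 := intervalIntegral.integral_hasDerivAt_right hint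
    (hcont.stronglyMeasurableAtFilter isOpen_Ioi s hs) (hcont.continuousAt (Ioi_mem_nhds hs))
  refine h1.congr_of_eventuallyEq ?_
  filter_upwards [Ioi_mem_nhds hs] with u hu
  rw [(hR u hu).2, intervalIntegral.integral_of_le (le_of_lt hu), integral_Ioc_eq_integral_Ioo]

/-- Differentiation under the integral sign on a half-open interval, including the one-sided
derivative at the left end point. -/
lemma hasDerivWithinAt_integral_Ico {α : Type*} [MeasurableSpace α] {μ : Measure α}
    [IsFiniteMeasure μ] {T : ℝ} {g g' : ℝ → α → ℝ}
    (hd : ∀ s ∈ Ico 0 T, ∀ x, HasDerivWithinAt (fun s => g s x) (g' s x) (Ico 0 T) s)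
    (hint : ∀ s ∈ Ico 0 T, Integrable (g s) μ)
    (hb : ∀ b < T, ∃ C, ∀ s ∈ Icc 0 b, ∀ x, ‖g' s x‖ ≤ C) {t : ℝ} (ht : t ∈ Ico 0 T) :
    HasDerivWithinAt (fun s => ∫ x, g s x ∂μ) (∫ x, g' t x ∂μ) (Ico 0 T) t := by
  rw [hasDerivWithinAt_iff_tendsto_slope]
  obtain ⟨b, htb, hbT⟩ := exists_between ht.2
  obtain ⟨C, hC⟩ := hb b hbT
  have hev : ∀ᶠ s in 𝓝[Ico 0 T \ {t}] t, s ∈ Ico 0 T ∧ s ∈ Icc 0 b ∧ s ≠ t := by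
    filter_upwards [self_mem_nhdsWithin, mem_nhdsWithin_of_mem_nhds (Iio_mem_nhds htb)] with s hs hs2
    exact ⟨hs.1, ⟨hs.1.1, le_of_lt hs2⟩, hs.2⟩
  have hsub : Icc 0 b ⊆ Ico 0 T := fun s hs => ⟨hs.1, hs.2.trans_lt hbT⟩
  have hlim : Tendsto (fun s => ∫ x, slope (fun s => g s x) t s ∂μ) (𝓝[Ico 0 T \ {t}] t)
      (𝓝 (∫ x, g' t x ∂μ)) := by
    refine tendsto_integral_filter_of_dominated_convergence (fun _ => C) ?_ ?_
      (integrable_const C) ?_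
    · filter_upwards [hev] with s hs
      simp only [slope_def_field]
      exact (((hint s hs.1).sub (hint t ht)).div_const _).aestronglyMeasurable
    · filter_upwards [hev] with s hs
      refine Eventually.of_forall fun x => ?_
      have htI : t ∈ Icc 0 b := ⟨ht.1, le_of_lt htb⟩
      have h1 := Convex.norm_image_sub_le_of_norm_hasDerivWithin_le
        (f := fun u => g u x) (f' := fun u => g' u x) (fun u hu => (hd u (hsub hu) x).mono hsub) (fun u hu => hC u hu x) (convex_Icc 0 b)
        htI hs.2.1
      rw [slope_def_field, norm_div]
      exact (div_le_iff₀ (norm_pos_iff.2 (sub_ne_zero.2 hs.2.2))).2 h1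
    · exact Eventually.of_forall fun x => hasDerivWithinAt_iff_tendsto_slope.1 (hd t ht x)
  refine hlim.congr' ?_
  filter_upwards [hev] with s hs
  simp only [slope_def_field]
  rw [integral_div, integral_sub (hint s hs.1) (hint t ht)]

/-- The Cauchy–Schwarz inequality, for a function `a` that is pointwise a geometric mean. -/
lemma sq_integral_le_mul {α : Type*} [MeasurableSpace α] {μ : Measure α} {a b c : α → ℝ}
    (ha : Integrable a μ) (hb : Integrable b μ) (hc : Integrable c μ)
    (hb0 : ∀ x, 0 < b x) (habc : ∀ x, a x ^ 2 = b x * c x) :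
    (∫ x, a x ∂μ) ^ 2 ≤ (∫ x, b x ∂μ) * ∫ x, c x ∂μ := by
  -- the quadratic `∫ (b s² + 2 a s + c)` in `s` is nonnegative, as `b` times its integrand is
  -- `(b s + a)²`
  have h := discrim_le_zero (a := ∫ x, b x ∂μ) (b := 2 * ∫ x, a x ∂μ) (c := ∫ x, c x ∂μ) fun s => by
    have h1 : 0 ≤ ∫ x, (b x * (s * s) + 2 * a x * s + c x) ∂μ := by
      refine integral_nonneg fun x => ?_
      have h2 : 0 ≤ b x * (b x * (s * s) + 2 * a x * s + c x) := by
        nlinarith [sq_nonneg (b x * s + a x), habc x]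
      exact (mul_nonneg_iff_of_pos_left (hb0 x)).1 h2
    rw [integral_add (by fun_prop) hc, integral_add (by fun_prop) (by fun_prop),
      integral_mul_const, integral_mul_const, integral_const_mul] at h1
    exact h1
  rw [discrim] at h
  nlinarith

/-! ### The derivative along the flow -/

namespace IsFlowSol

variable {n : ℕ} {f : Euc n → ℝ} {φ : ℝ → ℝ} {T : ℝ} {H : ℝ → Euc n → ℝ}

/-- The time derivative of the support functions, read off from the joint derivative. -/
def speed (T : ℝ) (H : ℝ → Euc n → ℝ) (p : ℝ × Euc n) : ℝ :=
  fderivWithin ℝ (fun p : ℝ × Euc n => H p.1 p.2) (Ico 0 T ×ˢ {(0 : Euc n)}ᶜ) p (1, 0)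

lemma uniqueDiffOn_dom : UniqueDiffOn ℝ (Ico 0 T ×ˢ ({(0 : Euc n)}ᶜ : Set (Euc n))) :=
  (uniqueDiffOn_Ico 0 T).prod isOpen_compl_singleton.uniqueDiffOn

lemma continuousOn_speed (hH : IsFlowSol n f φ (Ico 0 T) H) :
    ContinuousOn (speed T H) (Ico 0 T ×ˢ {(0 : Euc n)}ᶜ) :=
  (hH.smooth.continuousOn_fderivWithin uniqueDiffOn_dom (by simp)).clm_apply continuousOn_const

lemma hasDerivWithinAt_speed (hH : IsFlowSol n f φ (Ico 0 T) H) {s : ℝ} (hs : s ∈ Ico 0 T)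
    {x : Euc n} (hx : x ≠ 0) :
    HasDerivWithinAt (fun s => H s x) (speed T H (s, x)) (Ico 0 T) s := by
  have h1 := ((hH.smooth.differentiableOn (by simp)) (s, x) ⟨hs, hx⟩).hasFDerivWithinAt
  have h2 : HasDerivWithinAt (fun s : ℝ => (s, x)) (1, 0) (Ico 0 T) s :=
    (hasDerivWithinAt_id s _).prodMk (hasDerivWithinAt_const s _ x)
  have h3 : MapsTo (fun s : ℝ => (s, x)) (Ico 0 T) (Ico 0 T ×ˢ {(0 : Euc n)}ᶜ) :=
    fun u hu => ⟨hu, hx⟩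
  exact h1.comp_hasDerivWithinAt s h2 h3

lemma speed_eq (hH : IsFlowSol n f φ (Ico 0 T) H) {t : ℝ} (ht : t ∈ Ico 0 T)
    {x : Euc n} (hx : x ∈ USphere n) :
    speed T H (t, x) = H t x - flowEta n f φ (H t) * f x * radTerm n (H t) x ^ n /
        (φ (1 / H t x) * sphDet n (H t) x) :=
  (uniqueDiffOn_Ico 0 T t ht).eq_deriv _
    (hH.hasDerivWithinAt_speed ht (IsSupportFn.ne_zero_of_mem hx)) (hH.eqn t ht x hx)

/-- The time derivative of the integrand `R (1 / h) f`. -/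
lemma hasDerivWithinAt_integrand (hH : IsFlowSol n f φ (Ico 0 T) H) {R : ℝ → ℝ}
    (hRd : ∀ s : ℝ, 0 < s → HasDerivAt R (1 / (s * φ s)) s)
    {s : ℝ} (hs : s ∈ Ico 0 T) {x : Euc n} (hx : x ∈ USphere n) :
    HasDerivWithinAt (fun s => R (1 / H s x) * f x)
      (-(f x / φ (1 / H s x)) * (speed T H (s, x) / H s x)) (Ico 0 T) s := by
  have hpos := (hH.body s hs).pos x hx
  have h1 := hH.hasDerivWithinAt_speed hs (IsSupportFn.ne_zero_of_mem hx)
  have h2 : HasDerivWithinAt (fun u => (H u x)⁻¹) (-speed T H (s, x) / H s x ^ 2) (Ico 0 T) s :=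
    h1.inv hpos.ne'
  have h3 : HasDerivAt R (1 / ((H s x)⁻¹ * φ (H s x)⁻¹)) ((H s x)⁻¹) :=
    hRd _ (inv_pos.2 hpos)
  have h4 := (h3.comp_hasDerivWithinAt s h2).mul_const (f x)
  simp only [one_div]
  refine h4.congr_deriv ?_
  rw [one_div, mul_inv, inv_inv]
  field_simp

/-- On a compact time interval the time derivative of the integrand is bounded uniformly on the
sphere, being jointly continuous there. -/
lemma exists_bound_integrand_deriv (hH : IsFlowSol n f φ (Ico 0 T) H)
    (hf_smooth : ContDiffOn ℝ (⊤ : ℕ∞) f {(0 : Euc n)}ᶜ)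
    (hφ_smooth : ContDiffOn ℝ (⊤ : ℕ∞) φ (Ioi 0))
    (hφ_pos : ∀ s ∈ Ioi (0 : ℝ), 0 < φ s) {b : ℝ} (hb : b < T) :
    ∃ C, ∀ s ∈ Icc 0 b, ∀ x : USphere n,
      ‖-(f x / φ (1 / H s x)) * (speed T H (s, x) / H s x)‖ ≤ C := by
  have hsub : Icc 0 b ×ˢ USphere n ⊆ Ico 0 T ×ˢ {(0 : Euc n)}ᶜ := fun p hp =>
    ⟨⟨hp.1.1, hp.1.2.trans_lt hb⟩, IsSupportFn.ne_zero_of_mem hp.2⟩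
  have hpos : ∀ p ∈ Icc 0 b ×ˢ USphere n, 0 < H p.1 p.2 := fun p hp =>
    (hH.body p.1 (hsub hp).1).pos _ hp.2
  have hHc : ContinuousOn (fun p : ℝ × Euc n => H p.1 p.2) (Icc 0 b ×ˢ USphere n) :=
    hH.smooth.continuousOn.mono hsub
  have hfc : ContinuousOn (fun p : ℝ × Euc n => f p.2) (Icc 0 b ×ˢ USphere n) :=
    hf_smooth.continuousOn.comp continuousOn_snd fun p hp => (hsub hp).2
  have hinv : ContinuousOn (fun p : ℝ × Euc n => 1 / H p.1 p.2) (Icc 0 b ×ˢ USphere n) :=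
    continuousOn_const.div hHc fun p hp => (hpos p hp).ne'
  have hmaps : MapsTo (fun p : ℝ × Euc n => 1 / H p.1 p.2) (Icc 0 b ×ˢ USphere n) (Ioi 0) :=
    fun p hp => one_div_pos.2 (hpos p hp)
  have hφc : ContinuousOn (fun p : ℝ × Euc n => φ (1 / H p.1 p.2)) (Icc 0 b ×ˢ USphere n) :=
    hφ_smooth.continuousOn.comp hinv hmaps
  have hc : ContinuousOn (fun p : ℝ × Euc n =>
      -(f p.2 / φ (1 / H p.1 p.2)) * (speed T H p / H p.1 p.2)) (Icc 0 b ×ˢ USphere n) :=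
    (hfc.div hφc fun p hp => (hφ_pos _ (hmaps hp)).ne').neg.mul
      ((hH.continuousOn_speed.mono hsub).div hHc fun p hp => (hpos p hp).ne')
  obtain ⟨C, hC⟩ := (isCompact_Icc.prod (isCompact_sphere (0 : Euc n) 1)).exists_bound_of_continuousOn hc
  exact ⟨C, fun s hs x => hC (s, x) ⟨hs, x.2⟩⟩

end IsFlowSol


/-- the derivative identity for `P` when `ℜ(s) = ∫₀ˢ dt/(t φ(t))`,
and nonnegativity of the right-hand side via the Hölder (Cauchy-Schwarz) inequality. -/
theorem Pprime_identity_increasing_case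
    (n : ℕ) (hn : 2 ≤ n)
    (f : Euc n → ℝ) (φ : ℝ → ℝ) (T : ℝ) (hT : 0 < T)
    (hf_smooth : ContDiffOn ℝ (⊤ : ℕ∞) f {(0 : Euc n)}ᶜ)
    (hf_pos : ∀ x ∈ USphere n, 0 < f x)
    (hφ_smooth : ContDiffOn ℝ (⊤ : ℕ∞) φ (Ioi 0))
    (hφ_pos : ∀ s ∈ Ioi (0 : ℝ), 0 < φ s)
    (R : ℝ → ℝ)
    (hR : ∀ s ∈ Ioi (0 : ℝ), IntegrableOn (fun t => 1 / (t * φ t)) (Ioo 0 s) ∧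
      R s = ∫ t in Ioo (0 : ℝ) s, 1 / (t * φ t))
    (H : ℝ → Euc n → ℝ) (hH : IsFlowSol n f φ (Ico 0 T) H) :
    ∀ t ∈ Ico (0 : ℝ) T, ∃ d : ℝ,
      HasDerivWithinAt (fun s => sphInt n (fun x => R (1 / H s x) * f x)) d (Ico 0 T) t ∧
      d * sphInt n (fun x => f x / φ (1 / H t x)) =
        -(sphInt n (fun x => f x / φ (1 / H t x))) ^ 2 +
          sphInt n (fun x => f x ^ 2 * radTerm n (H t) x ^ n /
            (H t x * φ (1 / H t x) ^ 2 * sphDet n (H t) x)) *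
          sphInt n (fun x => H t x * sphDet n (H t) x / radTerm n (H t) x ^ n) ∧
      0 ≤ -(sphInt n (fun x => f x / φ (1 / H t x))) ^ 2 +
          sphInt n (fun x => f x ^ 2 * radTerm n (H t) x ^ n /
            (H t x * φ (1 / H t x) ^ 2 * sphDet n (H t) x)) *
          sphInt n (fun x => H t x * sphDet n (H t) x / radTerm n (H t) x ^ n) := by
  intro t ht
  have : Nontrivial (Euc n) := by
    have : Nonempty (Fin n) := ⟨⟨0, by omega⟩⟩
    infer_instance
  have : IsFiniteMeasure (sphMeasure n) := by unfold sphMeasure; infer_instance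
  have hne : sphMeasure n univ ≠ 0 := by
    rw [Ne, Measure.measure_univ_eq_zero]
    exact Measure.toSphere_ne_zero _
  have hRd : ∀ s : ℝ, 0 < s → HasDerivAt R (1 / (s * φ s)) s := fun s hs =>
    hasDerivAt_of_eq_integral hφ_smooth hφ_pos hR hs
  have hint : ∀ {g : USphere n → ℝ}, Continuous g → Integrable g (sphMeasure n) := fun hg =>
    hg.integrable_of_hasCompactSupport (HasCompactSupport.of_compactSpace _)
  have hfc : Continuous fun x : USphere n => f x :=
    continuousOn_iff_continuous_domRestrict.1
      (hf_smooth.continuousOn.mono fun _ hx => IsSupportFn.ne_zero_of_mem hx)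
  have hHc : ∀ s ∈ Ico 0 T, Continuous fun x : USphere n => H s x := fun s hs =>
    continuousOn_iff_continuous_domRestrict.1 (hH.body s hs).continuousOn_sphere
  have hHpos : ∀ s ∈ Ico 0 T, ∀ x : USphere n, 0 < H s x := fun s hs x =>
    (hH.body s hs).pos x x.2
  have hcomp : ∀ {u : ℝ → ℝ}, ContinuousOn u (Ioi 0) → ∀ s ∈ Ico 0 T,
      Continuous fun x : USphere n => u (1 / H s x) := fun hu s hs =>
    hu.comp_continuous (continuous_const.div (hHc s hs) fun x => (hHpos s hs x).ne')
      fun x => one_div_pos.2 (hHpos s hs x)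
  have hφc := hcomp hφ_smooth.continuousOn t ht
  have hRc := hcomp (u := R) fun s hs => (hRd s hs).continuousAt.continuousWithinAt
  have hcR : Continuous fun x : USphere n => radTerm n (H t) x :=
    continuousOn_iff_continuous_domRestrict.1 (hH.body t ht).continuousOn_radTerm
  have hcD : Continuous fun x : USphere n => sphDet n (H t) x :=
    continuousOn_iff_continuous_domRestrict.1 (hH.body t ht).continuousOn_sphDet
  have hf0 : ∀ x : USphere n, 0 < f x := fun x => hf_pos x x.2
  have hh0 := hHpos t ht
  have hφ0 : ∀ x : USphere n, 0 < φ (1 / H t x) := fun x => hφ_pos _ (one_div_pos.2 (hh0 x))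
  have hr0 : ∀ x : USphere n, 0 < radTerm n (H t) x := fun x => (hH.body t ht).radTerm_pos x.2
  have hD0 : ∀ x : USphere n, 0 < sphDet n (H t) x := fun x => (hH.body t ht).sphDet_pos x.2
  have hA : Integrable (fun x : USphere n => f x / φ (1 / H t x)) (sphMeasure n) :=
    hint (hfc.div hφc fun x => (hφ0 x).ne')
  have hB : Integrable (fun x : USphere n => f x ^ 2 * radTerm n (H t) x ^ n /
      (H t x * φ (1 / H t x) ^ 2 * sphDet n (H t) x)) (sphMeasure n) :=
    hint (((hfc.pow 2).mul (hcR.pow n)).div (((hHc t ht).mul (hφc.pow 2)).mul hcD)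
      fun x => (mul_pos (mul_pos (hh0 x) (pow_pos (hφ0 x) 2)) (hD0 x)).ne')
  have hC : Integrable (fun x : USphere n => H t x * sphDet n (H t) x / radTerm n (H t) x ^ n)
      (sphMeasure n) :=
    hint (((hHc t ht).mul hcD).div (hcR.pow n) fun x => (pow_pos (hr0 x) n).ne')
  have hApos : 0 < sphInt n (fun x => f x / φ (1 / H t x)) := by
    refine (integral_pos_iff_support_of_nonneg (fun x => (div_pos (hf0 x) (hφ0 x)).le) hA).2 ?_
    have hsupp : Function.support (fun x : USphere n => f x / φ (1 / H t x)) = univ :=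
      eq_univ_of_forall fun x => (div_pos (hf0 x) (hφ0 x)).ne'
    rw [hsupp]
    exact pos_iff_ne_zero.2 hne
  have hderiv := hasDerivWithinAt_integral_Ico (μ := sphMeasure n)
    (g := fun s (x : USphere n) => R (1 / H s x) * f x)
    (fun s hs x => hH.hasDerivWithinAt_integrand hRd hs x.2)
    (fun s hs => hint ((hRc s hs).mul hfc))
    (fun b hb => hH.exists_bound_integrand_deriv hf_smooth hφ_smooth hφ_pos hb) ht
  refine ⟨_, hderiv, ?_, ?_⟩
  -- substituting the flow equation, the derivative is `-A + η B` with `η = |S^{n-1}| / A`, and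
  -- `|S^{n-1}|` is the integral of `h det / ρⁿ`
  · have hpt : ∀ x : USphere n,
        -(f x / φ (1 / H t x)) * (IsFlowSol.speed T H (t, x) / H t x) =
          -(f x / φ (1 / H t x)) + flowEta n f φ (H t) * (f x ^ 2 * radTerm n (H t) x ^ n /
            (H t x * φ (1 / H t x) ^ 2 * sphDet n (H t) x)) := fun x => by
      have h1 := (hh0 x).ne'
      have h2 := (hφ0 x).ne'
      have h3 := (hD0 x).ne'
      rw [hH.speed_eq ht x.2]
      generalize φ (1 / H t x) = p at *
      field_simp
      ring
    have hAneg : Integrable (fun x : USphere n => -(f x / φ (1 / H t x))) (sphMeasure n) := hA.neg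
    have hA0 := hApos.ne'
    rw [integral_congr_ae (Eventually.of_forall hpt), integral_add hAneg (hB.const_mul _),
      integral_neg, integral_const_mul, (hH.body t ht).sphInt_eq_sphArea hn, flowEta]
    change (-sphInt n (fun x => f x / φ (1 / H t x)) + _ * sphInt n (fun x =>
      f x ^ 2 * radTerm n (H t) x ^ n / (H t x * φ (1 / H t x) ^ 2 * sphDet n (H t) x))) * _ = _
    field_simp
  -- Cauchy–Schwarz for `A = ∫ f / φ`, whose integrand is the geometric mean of the other two
  · have hcs := sq_integral_le_mul hA hB hC
      (fun x => div_pos (mul_pos (pow_pos (hf0 x) 2) (pow_pos (hr0 x) n))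
        (mul_pos (mul_pos (hh0 x) (pow_pos (hφ0 x) 2)) (hD0 x))) fun x => by
        have h1 := (hh0 x).ne'
        have h2 := (hφ0 x).ne'
        have h3 := (hD0 x).ne'
        have h4 := (hr0 x).ne'
        generalize φ (1 / H t x) = p at *
        field_simp
    simp only [sphInt]
    linarith
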